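/- A propositional normal logic program P has a total Fitting model if and only if there exist a total model I of P and a total level mapping l for P such that P satisfies (F) with respect to I and l. -/

import Mathlib

namespace LP

/-- A literal over a set of propositional atoms: an atom or a negated atom. -/
inductive Lit (atom : Type) where
  | pos : atom → Lit atom
  | neg : atom → Lit atom

/-- The underlying atom of a literal. -/
def Lit.atomOf {atom : Type} : Lit atom → atom
  | .pos a => a
  | .neg a => a

/-- A clause `head ← pos₁,…,posₙ, ¬neg₁,…,¬negₘ`. -/
structure Clause (atom : Type) where
  head : atom
  pos : Finset atom
  neg : Finset atom

variable {atom : Type}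

/-- A (propositional) normal logic program: a set of clauses. -/
abbrev Program (atom : Type) := Set (Clause atom)

/-- Partial interpretations: sets of literals. -/
abbrev Interp (atom : Type) := Set (Lit atom)

def Consistent (I : Interp atom) : Prop := ∀ a : atom, ¬ (Lit.pos a ∈ I ∧ Lit.neg a ∈ I)

def Total (I : Interp atom) : Prop := ∀ a : atom, Lit.pos a ∈ I ∨ Lit.neg a ∈ I

/-- An atom is defined (true or false, i.e. not undefined) in `I`. -/
def Defined (I : Interp atom) (A : atom) : Prop := Lit.pos A ∈ I ∨ Lit.neg A ∈ I

/-- Every body literal of the clause is true in `I`. -/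
def BodyTrue (I : Interp atom) (C : Clause atom) : Prop :=
  (∀ a ∈ C.pos, Lit.pos a ∈ I) ∧ (∀ b ∈ C.neg, Lit.neg b ∈ I)

/-- Some body literal of the clause is false in `I`. -/
def BodyFalse (I : Interp atom) (C : Clause atom) : Prop :=
  (∃ a ∈ C.pos, Lit.neg a ∈ I) ∨ (∃ b ∈ C.neg, Lit.pos b ∈ I)

/-- Three-valued model. -/
def Model3 (P : Program atom) (I : Interp atom) : Prop :=
  Consistent I ∧ ∀ C ∈ P,
    (BodyTrue I C → Lit.pos C.head ∈ I) ∧ (¬ BodyFalse I C → Lit.neg C.head ∉ I)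

/-- Two-valued model. -/
def Model2 (P : Program atom) (M : Set atom) : Prop :=
  ∀ C ∈ P, (∀ a ∈ C.pos, a ∈ M) → (∀ b ∈ C.neg, b ∉ M) → C.head ∈ M

/-- A program is definite if no clause has negative body literals. -/
def Definite (P : Program atom) : Prop := ∀ C ∈ P, C.neg = ∅

/-- The one-step operator `T_P⁺` for definite programs. -/
def Tplus (P : Program atom) (M : Set atom) : Set atom :=
  {A | ∃ C ∈ P, C.head = A ∧ C.neg = ∅ ∧ ∀ a ∈ C.pos, a ∈ M}

def TplusIter (P : Program atom) : ℕ → Set atom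
  | 0 => ∅
  | n + 1 => Tplus P (TplusIter P n)

/-- `T_P⁺ ↑ ω`, the least two-valued model of a definite program. -/
def TplusOmega (P : Program atom) : Set atom := ⋃ n, TplusIter P n

/-- The Gelfond–Lifschitz reduct `P/M`. -/
def GLreduct (P : Program atom) (M : Set atom) : Program atom :=
  {C' | ∃ C ∈ P, (∀ b ∈ C.neg, b ∉ M) ∧ C' = ⟨C.head, C.pos, ∅⟩}

/-- The Gelfond–Lifschitz operator. -/
def GLop (P : Program atom) (M : Set atom) : Set atom := TplusOmega (GLreduct P M)

/-- Stable model. -/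
def Stable (P : Program atom) (M : Set atom) : Prop := GLop P M = M

def posLits (S : Set atom) : Interp atom := Lit.pos '' S
def negLits (S : Set atom) : Interp atom := Lit.neg '' S

/-- Three-valued immediate-consequence operator `T_P`. -/
def TP (P : Program atom) (I : Interp atom) : Set atom :=
  {A | ∃ C ∈ P, C.head = A ∧ BodyTrue I C}

/-- `F_P`: atoms all of whose clauses have false bodies. -/
def FP (P : Program atom) (I : Interp atom) : Set atom :=
  {A | ∀ C ∈ P, C.head = A → BodyFalse I C}

/-- Fitting's operator `Φ_P`. -/
def Phi (P : Program atom) (I : Interp atom) : Interp atom :=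
  posLits (TP P I) ∪ negLits (FP P I)

/-- Knaster–Tarski least (pre-)fixed point of an operator on sets. -/
def lfpSet {L : Type*} (F : Set L → Set L) : Set L := ⋂₀ {I | F I ⊆ I}

/-- Knaster–Tarski greatest (post-)fixed point of an operator on sets. -/
def gfpSet {L : Type*} (F : Set L → Set L) : Set L := ⋃₀ {I | I ⊆ F I}

/-- The Fitting (Kripke–Kleene) model: least fixed point of `Φ_P`. -/
def FittingModel (P : Program atom) : Interp atom := lfpSet (Phi P)

/-- Transfinite iteration `F ↑ α` of an operator starting from `∅`. -/
noncomputable def iterOrd {L : Type*} (F : Set L → Set L) (α : Ordinal.{0}) : Set L :=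
  Ordinal.limitRecOn α ∅ (fun _ ih => F ih) (fun o _ ih => ⋃ β, ⋃ h : β < o, ih β h)

/-- `U` is an unfounded set of `P` with respect to `I`. -/
def Unfounded (P : Program atom) (I : Interp atom) (U : Set atom) : Prop :=
  ∀ A ∈ U, ∀ C ∈ P, C.head = A → BodyFalse I C ∨ ∃ a ∈ C.pos, a ∈ U

/-- The greatest unfounded set of `P` with respect to `I`. -/
def UP (P : Program atom) (I : Interp atom) : Set atom := ⋃₀ {U | Unfounded P I U}

/-- The van Gelder–Ross–Schlipf operator `W_P`. -/
def WP (P : Program atom) (I : Interp atom) : Interp atom :=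
  posLits (TP P I) ∪ negLits (UP P I)

/-- The well-founded model: least fixed point of `W_P`. -/
def WFModel (P : Program atom) : Interp atom := lfpSet (WP P)

/-- `P` satisfies (F) with respect to `I` and the level mapping `l`. -/
def CondF (P : Program atom) (I : Interp atom) (l : atom → Ordinal.{0}) : Prop :=
  ∀ A : atom, Defined I A →
    (Lit.pos A ∈ I ∧ ∃ C ∈ P, C.head = A ∧
        (∀ a ∈ C.pos, Lit.pos a ∈ I ∧ l a < l A) ∧
        (∀ b ∈ C.neg, Lit.neg b ∈ I ∧ l b < l A)) ∨
    (Lit.neg A ∈ I ∧ ∀ C ∈ P, C.head = A →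
        (∃ a ∈ C.pos, Lit.neg a ∈ I ∧ l a < l A) ∨
        (∃ b ∈ C.neg, Lit.pos b ∈ I ∧ l b < l A))

/-- `P` satisfies (WF) with respect to `I` and the level mapping `l`. -/
def CondWF (P : Program atom) (I : Interp atom) (l : atom → Ordinal.{0}) : Prop :=
  ∀ A : atom, Defined I A →
    (Lit.pos A ∈ I ∧ ∃ C ∈ P, C.head = A ∧
        (∀ a ∈ C.pos, Lit.pos a ∈ I ∧ l a < l A) ∧
        (∀ b ∈ C.neg, Lit.neg b ∈ I ∧ l b < l A)) ∨
    (Lit.neg A ∈ I ∧ ∀ C ∈ P, C.head = A →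
        (∃ a ∈ C.pos, Lit.neg a ∈ I ∧ l a ≤ l A) ∨
        (∃ b ∈ C.neg, Lit.pos b ∈ I ∧ l b < l A))

/-- `P` satisfies (WS) with respect to `I` and the level mapping `l`. -/
def CondWS (P : Program atom) (I : Interp atom) (l : atom → Ordinal.{0}) : Prop :=
  ∀ A : atom, Defined I A →
    (Lit.pos A ∈ I ∧ ∃ C ∈ P, C.head = A ∧
        (∀ a ∈ C.pos, Lit.pos a ∈ I ∧ l a < l A) ∧
        (∀ b ∈ C.neg, Lit.neg b ∈ I ∧ l b < l A)) ∨
    (Lit.neg A ∈ I ∧ ∀ C ∈ P, C.head = A →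
        (∃ a ∈ C.pos, Lit.neg a ∈ I ∧ l a < l A) ∨
        ((∀ a ∈ C.pos, l a ≤ l A) ∧ (∀ b ∈ C.neg, l b < l A) ∧
            ∃ a ∈ C.pos, Lit.neg a ∈ I) ∨
        (∃ b ∈ C.neg, Lit.pos b ∈ I ∧ l b < l A))

/-- `A` refers to `B`. -/
def RefersTo (P : Program atom) (A B : atom) : Prop :=
  ∃ C ∈ P, C.head = A ∧ (B ∈ C.pos ∨ B ∈ C.neg)

/-- `A` refers negatively to `B`. -/
def RefersNeg (P : Program atom) (A B : atom) : Prop :=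
  ∃ C ∈ P, C.head = A ∧ B ∈ C.neg

/-- `DepOn P A B`: `A` depends on `B`, i.e. `B ≤ A`. -/
def DepOn (P : Program atom) : atom → atom → Prop := Relation.TransGen (RefersTo P)

/-- `DepNeg P B A`: `B < A`, i.e. `A` depends negatively on `B`. -/
def DepNeg (P : Program atom) (B A : atom) : Prop :=
  ∃ C D, RefersNeg P C D ∧ (DepOn P A C ∨ C = A) ∧ (DepOn P D B ∨ B = D)

/-- `A ~ B`. -/
def Sim (P : Program atom) (A B : atom) : Prop :=
  A = B ∨ (DepNeg P A B ∧ DepNeg P B A)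

/-- The components of `P`: equivalence classes of `~`. -/
def IsComponent (P : Program atom) (C : Set atom) : Prop :=
  ∃ A : atom, C = {B | Sim P A B}

/-- A trivial component: a singleton `{A}` with `A ≮ A`. -/
def TrivialComponent (P : Program atom) (C : Set atom) : Prop :=
  ∃ A : atom, C = {A} ∧ ¬ DepNeg P A A

/-- The ordering `≺` on components. -/
def CompLt (P : Program atom) (C₁ C₂ : Set atom) : Prop :=
  C₁ ≠ C₂ ∧ ∀ A₁ ∈ C₁, ∃ A₂ ∈ C₂, DepNeg P A₁ A₂

def MinimalComponent (P : Program atom) (C : Set atom) : Prop :=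
  IsComponent P C ∧ ¬ ∃ C₂, IsComponent P C₂ ∧ CompLt P C₂ C

/-- The bottom stratum `S(P)`: union of all minimal components. -/
def bottomStratum (P : Program atom) : Set atom :=
  {A | ∃ C, MinimalComponent P C ∧ A ∈ C}

/-- The bottom layer `L(P)`: clauses with head in the bottom stratum. -/
def bottomLayer (P : Program atom) : Program atom :=
  {C ∈ P | C.head ∈ bottomStratum P}

/-- Delete from the body of `C` all literals true in `I`. -/
noncomputable def reduceClause (I : Interp atom) (C : Clause atom) : Clause atom :=
  letI : ∀ p : Prop, Decidable p := fun p => Classical.propDecidable p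
  ⟨C.head, C.pos.filter (fun a => Lit.pos a ∉ I), C.neg.filter (fun b => Lit.neg b ∉ I)⟩

/-- Steps (1) and (2) of the reduct of `P` with respect to `I`. -/
noncomputable def step12 (P : Program atom) (I : Interp atom) : Program atom :=
  {C' | ∃ C ∈ P, Lit.pos C.head ∉ I ∧ ¬ BodyFalse I C ∧ C' = reduceClause I C}

def IsUnitClause (C : Clause atom) : Prop := C.pos = ∅ ∧ C.neg = ∅

/-- The reduct `P/I` of Przymusinska–Przymusinski (steps (1)–(3)). -/
noncomputable def reduct (P : Program atom) (I : Interp atom) : Program atom :=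
  {C ∈ step12 P I | IsUnitClause C ∨ ¬ ∃ C' ∈ step12 P I, C'.head = C.head ∧ IsUnitClause C'}

/-- The atoms occurring in `P`. -/
def atomsOf (P : Program atom) : Set atom :=
  {A | ∃ C ∈ P, A = C.head ∨ A ∈ C.pos ∨ A ∈ C.neg}

/-- `R`: atoms undefined in `N` which are eliminated from `P` by reducing w.r.t. `N`. -/
noncomputable def Ratoms (P : Program atom) (N : Interp atom) : Set atom :=
  {A | A ∈ atomsOf P ∧ A ∉ atomsOf (reduct P N) ∧ ¬ Defined N A}

/-- The definite (partial) model of a definite program `Q`. -/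
def defPartialModel (Q : Program atom) : Interp atom :=
  posLits (TplusOmega Q) ∪ negLits (atomsOf Q \ TplusOmega Q)

/-- The stopping condition of the weakly perfect model construction at `N`. -/
noncomputable def stopCond (P : Program atom) (N : Interp atom) : Prop :=
  reduct P N = ∅ ∨ bottomStratum (reduct P N) = ∅ ∨
    ∃ C ∈ bottomLayer (reduct P N), C.neg ≠ ∅

/-- `M_α` computed from `N_α` (empty if the construction has stopped). -/
noncomputable def Mstep (P : Program atom) (N : Interp atom) : Interp atom :=
  letI : ∀ p : Prop, Decidable p := fun p => Classical.propDecidable p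
  if stopCond P N then ∅
  else defPartialModel (bottomLayer (reduct P N)) ∪ negLits (Ratoms P N)

/-- `N_α = ⋃_{0<δ<α} M_δ` of the weakly perfect model construction. -/
noncomputable def Nseq (P : Program atom) : Ordinal.{0} → Interp atom :=
  Ordinal.lt_wf.fix (C := fun _ => Interp atom)
    (fun α ih => ⋃ β : Ordinal.{0}, ⋃ h : β < α, Mstep P (ih β h))

/-- The stage at which the weakly perfect model construction stops. -/
noncomputable def wpStop (P : Program atom) : Ordinal.{0} :=
  sInf {α | stopCond P (Nseq P α)}

/-- The weakly perfect model `M_P = N_α ∪ ¬R_α` at the stopping stage `α`. -/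
noncomputable def weaklyPerfectModel (P : Program atom) : Interp atom :=
  Nseq P (wpStop P) ∪ negLits (Ratoms P (Nseq P (wpStop P)))

/-- Clause subsumption `C₁ ≼ C₂`. -/
def ClauseSub (C₁ C₂ : Clause atom) : Prop :=
  C₁.head = C₂.head ∧ C₁.pos ⊆ C₂.pos ∧ C₁.neg ⊆ C₂.neg

/-- `P'` subsumes `Q` model-consistently with respect to `I`: `P' ≼_I Q`. -/
def SubsumesMC (P' Q : Program atom) (I : Interp atom) : Prop :=
  (∀ C₁ ∈ P', ∃ C₂ ∈ Q, ClauseSub C₁ C₂ ∧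
      (∀ a ∈ C₂.pos, a ∉ C₁.pos → Lit.pos a ∈ I) ∧
      (∀ b ∈ C₂.neg, b ∉ C₁.neg → Lit.neg b ∈ I)) ∧
  (∀ C₂ ∈ Q, BodyTrue I C₂ → Lit.pos C₂.head ∉ I → ∃ C₁ ∈ P', ClauseSub C₁ C₂)


/-!
Membership in the least fixed point of a monotone `f : Set β →o Set β` is witnessed by ordinal
ranks: send `x` to the first stage of the transfinite iteration containing it; then `x` is already
produced by `f` from elements of smaller rank. Conversely, any set in which every element is so
produced is contained in the least fixed point, by induction on the rank. For a consistent
interpretation `I`, a rank on the literals of `I` amounts to a level mapping on atoms, and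
condition (F) says precisely that every literal of `I` is produced by `Φ_P` from literals of `I` of
smaller level. Hence the Fitting model is the greatest model satisfying (F) for some level mapping.
-/

section RankedFixedPoint

universe u

variable {β : Type u}

open OrdinalApprox

theorem mem_lfpApprox_bot_iff {f : Set β →o Set β} {α : Ordinal.{u}} {x : β} :
    x ∈ lfpApprox f ⊥ α ↔ ∃ γ < α, x ∈ f (lfpApprox f ⊥ γ) := by
  rw [lfpApprox]
  simp

theorem exists_rank_mem_map_lfp (f : Set β →o Set β) :
    ∃ r : β → Ordinal.{u}, ∀ x ∈ f.lfp, x ∈ f {y ∈ f.lfp | r y < r x} := by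
  let r : β → Ordinal.{u} := fun x ↦ sInf {α | x ∈ lfpApprox f ⊥ α}
  have stage_subset_lfp (α : Ordinal.{u}) : lfpApprox f ⊥ α ⊆ f.lfp :=
    lfpApprox_le_of_mem_fixedPoints f f.map_lfp bot_le α
  have mem_stage_rank {x : β} (hx : x ∈ f.lfp) : x ∈ lfpApprox f ⊥ (r x) := by
    obtain ⟨α, hα⟩ := lfp_mem_range_lfpApprox f
    exact csInf_mem (s := {α | x ∈ lfpApprox f ⊥ α}) ⟨α, hα.symm.subset hx⟩
  have rank_le_of_mem_stage {x : β} {α : Ordinal.{u}} (hx : x ∈ lfpApprox f ⊥ α) : r x ≤ α :=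
    csInf_le' hx
  refine ⟨r, fun x hx ↦ ?_⟩
  obtain ⟨γ, hγ, hxγ⟩ := mem_lfpApprox_bot_iff.1 (mem_stage_rank hx)
  have stage_subset : lfpApprox f ⊥ γ ⊆ {y ∈ f.lfp | r y < r x} := fun y hy ↦
    ⟨stage_subset_lfp γ hy, (rank_le_of_mem_stage hy).trans_lt hγ⟩
  exact f.monotone stage_subset hxγ

theorem subset_lfp_of_rank {ι : Type*} [Preorder ι] [WellFoundedLT ι] {f : Set β →o Set β}
    {s : Set β} {r : β → ι} (h : ∀ x ∈ s, x ∈ f {y ∈ s | r y < r x}) : s ⊆ f.lfp := by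
  intro x
  induction x using (InvImage.wf r (wellFounded_lt (α := ι))).induction with
  | _ x ih =>
    intro hx
    exact f.map_le_lfp (fun y hy ↦ ih y hy.2 hy.1) (h x hx)

end RankedFixedPoint

section FittingOperator

variable {P : Program atom} {I J : Interp atom} {C : Clause atom} {A : atom}

theorem BodyTrue.mono (hIJ : I ⊆ J) (h : BodyTrue I C) : BodyTrue J C :=
  ⟨fun a ha ↦ hIJ (h.1 a ha), fun b hb ↦ hIJ (h.2 b hb)⟩

theorem BodyFalse.mono (hIJ : I ⊆ J) (h : BodyFalse I C) : BodyFalse J C :=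
  h.imp (fun ⟨a, ha, haI⟩ ↦ ⟨a, ha, hIJ haI⟩) (fun ⟨b, hb, hbI⟩ ↦ ⟨b, hb, hIJ hbI⟩)

theorem BodyTrue.exists_conflict (hI : BodyTrue I C) (hJ : BodyFalse J C) :
    ∃ a, Lit.pos a ∈ I ∧ Lit.neg a ∈ J ∨ Lit.neg a ∈ I ∧ Lit.pos a ∈ J := by
  rcases hJ with ⟨a, ha, haJ⟩ | ⟨b, hb, hbJ⟩
  · exact ⟨a, .inl ⟨hI.1 a ha, haJ⟩⟩
  · exact ⟨b, .inr ⟨hI.2 b hb, hbJ⟩⟩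

theorem pos_mem_phi : Lit.pos A ∈ Phi P I ↔ ∃ C ∈ P, C.head = A ∧ BodyTrue I C := by
  simp [Phi, posLits, negLits, TP]

theorem neg_mem_phi : Lit.neg A ∈ Phi P I ↔ ∀ C ∈ P, C.head = A → BodyFalse I C := by
  simp [Phi, posLits, negLits, FP]

theorem phi_monotone (P : Program atom) : Monotone (Phi P) := by
  rintro I J hIJ (A | A) hA
  · obtain ⟨C, hC, hhead, hbody⟩ := pos_mem_phi.1 hA
    exact pos_mem_phi.2 ⟨C, hC, hhead, hbody.mono hIJ⟩
  · exact neg_mem_phi.2 fun C hC hhead ↦ (neg_mem_phi.1 hA C hC hhead).mono hIJ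

/-- Fitting's operator `Φ_P`, bundled with its monotonicity so that the library's theory of least
fixed points applies; `FittingModel P` is definitionally `(phiHom P).lfp`. -/
def phiHom (P : Program atom) : Interp atom →o Interp atom := ⟨Phi P, phi_monotone P⟩

theorem phi_fittingModel (P : Program atom) : Phi P (FittingModel P) = FittingModel P :=
  (phiHom P).map_lfp

/-- The consistent part of a set of literals: its literals whose complement does not also belong to
it. The consistent part of a fixed point of `Φ_P` is again closed under `Φ_P`, so the least fixed
point coincides with its consistent part. -/
def consistentPart (I : Interp atom) : Interp atom :=
  {L ∈ I | ¬ (Lit.pos L.atomOf ∈ I ∧ Lit.neg L.atomOf ∈ I)}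

theorem consistentPart_subset (I : Interp atom) : consistentPart I ⊆ I :=
  Set.sep_subset _ _

theorem not_bodyFalse_of_bodyTrue_consistentPart (h : BodyTrue (consistentPart I) C) :
    ¬ BodyFalse I C := fun hfalse ↦ by
  obtain ⟨a, ⟨haI, hneg⟩ | ⟨haI, hpos⟩⟩ := h.exists_conflict hfalse
  · exact haI.2 ⟨haI.1, hneg⟩
  · exact haI.2 ⟨hpos, haI.1⟩

theorem not_bodyTrue_of_bodyFalse_consistentPart (h : BodyFalse (consistentPart I) C) :
    ¬ BodyTrue I C := fun htrue ↦ by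
  obtain ⟨a, ⟨hpos, haI⟩ | ⟨hneg, haI⟩⟩ := htrue.exists_conflict h
  · exact haI.2 ⟨hpos, haI.1⟩
  · exact haI.2 ⟨haI.1, hneg⟩

theorem phi_consistentPart_subset (hI : Phi P I = I) :
    Phi P (consistentPart I) ⊆ consistentPart I := by
  intro L hL
  refine ⟨hI ▸ phi_monotone P (consistentPart_subset I) hL, fun ⟨hpos, hneg⟩ ↦ ?_⟩
  rw [← hI] at hpos hneg
  rcases L with A | A
  · obtain ⟨C, hC, hhead, hbody⟩ := pos_mem_phi.1 hL
    exact not_bodyFalse_of_bodyTrue_consistentPart hbody (neg_mem_phi.1 hneg C hC hhead)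
  · obtain ⟨C, hC, hhead, hbody⟩ := pos_mem_phi.1 hpos
    exact not_bodyTrue_of_bodyFalse_consistentPart (neg_mem_phi.1 hL C hC hhead) hbody

theorem fittingModel_consistent (P : Program atom) : Consistent (FittingModel P) := by
  have subset_consistentPart : FittingModel P ⊆ consistentPart (FittingModel P) :=
    (phiHom P).lfp_le (phi_consistentPart_subset (phi_fittingModel P))
  exact fun a h ↦ (subset_consistentPart h.1).2 h

theorem Consistent.model3_of_phi_eq (hcons : Consistent I) (hI : Phi P I = I) : Model3 P I := by
  refine ⟨hcons, fun C hC ↦ ⟨fun hbody ↦ ?_, fun hbody hneg ↦ ?_⟩⟩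
  · exact hI ▸ pos_mem_phi.2 ⟨C, hC, rfl, hbody⟩
  · exact hbody (neg_mem_phi.1 (hI.symm ▸ hneg) C hC rfl)

end FittingOperator

section LevelMapping

variable {P : Program atom} {I J : Interp atom} {l : atom → Ordinal.{0}}

theorem Total.mono (hIJ : I ⊆ J) (hI : Total I) : Total J :=
  fun a ↦ (hI a).imp (@hIJ _) (@hIJ _)

theorem Consistent.condF_iff (hI : Consistent I) :
    CondF P I l ↔ ∀ L ∈ I, L ∈ Phi P {K ∈ I | l K.atomOf < l L.atomOf} := by
  constructor
  · rintro hF (A | A) hA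
    · rcases hF A (.inl hA) with ⟨-, hclause⟩ | ⟨hneg, -⟩
      · exact pos_mem_phi.2 hclause
      · exact (hI A ⟨hA, hneg⟩).elim
    · rcases hF A (.inr hA) with ⟨hpos, -⟩ | ⟨-, hclauses⟩
      · exact (hI A ⟨hpos, hA⟩).elim
      · exact neg_mem_phi.2 hclauses
  · rintro hΦ A (hA | hA)
    · exact .inl ⟨hA, pos_mem_phi.1 (hΦ _ hA)⟩
    · exact .inr ⟨hA, neg_mem_phi.1 (hΦ _ hA)⟩

theorem Consistent.exists_level_eq {ι : Type*} (hI : Consistent I) (r : Lit atom → ι) :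
    ∃ l : atom → ι, ∀ L ∈ I, l L.atomOf = r L := by
  classical
  refine ⟨fun a ↦ if Lit.pos a ∈ I then r (.pos a) else r (.neg a), ?_⟩
  rintro (A | A) hA
  · exact if_pos hA
  · exact if_neg fun hpos ↦ hI A ⟨hpos, hA⟩

theorem CondF.subset_fittingModel (hF : CondF P I l) (hI : Consistent I) : I ⊆ FittingModel P :=
  subset_lfp_of_rank (f := phiHom P) (r := fun L ↦ l L.atomOf) (hI.condF_iff.1 hF)

theorem exists_condF_fittingModel (P : Program atom) :
    ∃ l : atom → Ordinal.{0}, CondF P (FittingModel P) l := by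
  have hcons := fittingModel_consistent P
  obtain ⟨r, hr⟩ := exists_rank_mem_map_lfp (phiHom P)
  obtain ⟨l, hl⟩ := hcons.exists_level_eq r
  refine ⟨l, hcons.condF_iff.2 fun L hL ↦ phi_monotone P ?_ (hr L hL)⟩
  rintro K ⟨hK, hlt⟩
  exact ⟨hK, by rwa [hl K hK, hl L hL]⟩

theorem isGreatest_fittingModel (P : Program atom) :
    IsGreatest {I | Model3 P I ∧ ∃ l : atom → Ordinal.{0}, CondF P I l} (FittingModel P) :=
  ⟨⟨(fittingModel_consistent P).model3_of_phi_eq (phi_fittingModel P),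
    exists_condF_fittingModel P⟩, fun _ ⟨hmodel, _, hF⟩ ↦ hF.subset_fittingModel hmodel.1⟩

end LevelMapping

theorem total_fitting_char_general (P : Program atom) :
    Total (FittingModel P) ↔
    ∃ (I : Interp atom) (l : atom → Ordinal.{0}),
      Model3 P I ∧ Total I ∧ CondF P I l := by
  obtain ⟨⟨hmodel, l, hF⟩, hgreatest⟩ := isGreatest_fittingModel P
  constructor
  · exact fun htotal ↦ ⟨FittingModel P, l, hmodel, htotal, hF⟩
  · rintro ⟨I, l, hI, htotal, hF⟩
    exact htotal.mono (hgreatest ⟨hI, l, hF⟩)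

/-- `P` has a total Fitting model iff there is a total model `I` and a
total level mapping `l` such that `P` satisfies (F) w.r.t. `I` and `l`. -/
theorem total_fitting_char {atom : Type} [Countable atom] (P : Program atom) :
    Total (FittingModel P) ↔
    ∃ (I : Interp atom) (l : atom → Ordinal.{0}),
      Model3 P I ∧ Total I ∧ CondF P I l :=
  total_fitting_char_general P

end LP
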